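/- arXiv:1702.03057 — 3 statements merged into one kernel-verified Lean document; each statement's English description precedes it below -/
import Mathlib

section
/- (Theorem 3.1, partial estimator) Let (S_α)_{α ∈ ℕ^d} be integrable real random variables on a probability space (Ω, F, P), and let N be an ℕ^d-valued random variable independent of the family (S_α), with P(N ≥ α) > 0 for every α ∈ I_0^n, where n ∈ ℕ. Then the partial estimator Z̄_n = Σ_{α ∈ I_0^n} ΔS_α · 1_{{N ≥ α}} / P(N ≥ α) satisfies E[Z̄_n] = E[S_{(n,…,n)}]. -/
open MeasureTheory ProbabilityTheory

/-- The `i`-th difference operator: `(Δ_i S)_α = S_α − S_{α−e_i}` if `α_i > 0`,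
and `(Δ_i S)_α = S_α` if `α_i = 0`. -/
def diffOp {d : ℕ} {V : Type*} [AddCommGroup V] [Module ℝ V]
    (i : Fin d) (S : (Fin d → ℕ) → V) : (Fin d → ℕ) → V :=
  fun α => if α i = 0 then S α else S α - S (Function.update α i (α i - 1))

/-- The mixed difference operator `Δ = Δ_1 ∘ ⋯ ∘ Δ_d`. -/
def mixedDiff {d : ℕ} {V : Type*} [AddCommGroup V] [Module ℝ V]
    (S : (Fin d → ℕ) → V) : (Fin d → ℕ) → V :=
  (List.finRange d).foldr (fun i T => diffOp i T) S

theorem sum_pi_update_aux {d : ℕ} (s : Fin d → Finset ℕ) (i : Fin d) (n : ℕ) (t : Finset ℕ)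
    (hs : s i = {n}) (f : (Fin d → ℕ) → ℝ) :
    ∑ α ∈ Fintype.piFinset (Function.update s i t), f α
      = ∑ α ∈ Fintype.piFinset s, ∑ k ∈ t, f (Function.update α i k) := by
  rw [← Finset.sum_product']
  refine Finset.sum_nbij' (fun α => (Function.update α i n, α i))
    (fun p => Function.update p.1 i p.2) ?_ ?_ ?_ ?_ ?_
  · intro α hα
    rw [Fintype.mem_piFinset] at hα
    rw [Finset.mem_product, Fintype.mem_piFinset]
    refine ⟨fun j => ?_, by simpa using hα i⟩
    by_cases h : j = i
    · subst h; simp [hs]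
    · simpa [h] using hα j
  · rintro ⟨α, k⟩ hα
    rw [Finset.mem_product, Fintype.mem_piFinset] at hα
    rw [Fintype.mem_piFinset]
    intro j
    by_cases h : j = i
    · subst h; simpa using hα.2
    · simpa [h] using hα.1 j
  · intro α _
    simp
  · rintro ⟨α, k⟩ hα
    rw [Finset.mem_product, Fintype.mem_piFinset] at hα
    have := hα.1 i
    rw [hs, Finset.mem_singleton] at this
    simp [← this]
  · intro α _
    simp

theorem tele_aux {d : ℕ} (T : (Fin d → ℕ) → ℝ) (i : Fin d) (α : Fin d → ℕ) (n : ℕ) :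
    ∑ k ∈ Finset.range (n + 1), diffOp i T (Function.update α i k)
      = T (Function.update α i n) := by
  induction n with
  | zero => simp [diffOp]
  | succ m ih =>
    rw [Finset.sum_range_succ, ih]
    simp [diffOp]

theorem foldr_sum_aux {d : ℕ} (S : (Fin d → ℕ) → ℝ) (n : ℕ) (l : List (Fin d)) (hl : l.Nodup) :
    ∑ α ∈ Fintype.piFinset (fun j => if j ∈ l then Finset.range (n + 1) else {n}),
      l.foldr (fun i T => diffOp i T) S α = S (fun _ => n) := by
  induction l with
  | nil =>
    have : Fintype.piFinset (fun _ : Fin d => ({n} : Finset ℕ)) = {fun _ => n} := by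
      ext α; simp [Fintype.mem_piFinset, funext_iff]
    simp [this]
  | cons i l ih =>
    rw [List.nodup_cons] at hl
    rw [← ih hl.2]
    have : (fun j => if j ∈ i :: l then Finset.range (n + 1) else {n})
        = Function.update (fun j => if j ∈ l then Finset.range (n + 1) else {n}) i
          (Finset.range (n + 1)) := by
      funext j
      by_cases h : j = i
      · subst h; simp
      · simp [h]
    rw [this, sum_pi_update_aux _ i n _ (by simp [hl.1])]
    refine Finset.sum_congr rfl fun α hα => ?_
    rw [List.foldr_cons, tele_aux]
    have h := Fintype.mem_piFinset.1 hα i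
    simp only [hl.1, if_false, Finset.mem_singleton] at h
    rw [← h, Function.update_eq_self]

theorem mixedDiff_sum_aux {d : ℕ} (S : (Fin d → ℕ) → ℝ) (n : ℕ) :
    ∑ α ∈ Finset.Iic ((fun _ => n) : Fin d → ℕ), mixedDiff S α = S (fun _ => n) := by
  rw [← foldr_sum_aux S n _ (List.nodup_finRange d)]
  refine Finset.sum_congr ?_ fun _ _ => rfl
  ext α
  simp [Fintype.mem_piFinset, Pi.le_def, Nat.lt_succ_iff]

theorem foldr_meas_aux {d : ℕ} (l : List (Fin d)) (α : Fin d → ℕ) :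
    Measurable (fun S : (Fin d → ℕ) → ℝ => l.foldr (fun i T => diffOp i T) S α) := by
  induction l generalizing α with
  | nil => exact measurable_pi_apply α
  | cons i l ih =>
    simp only [List.foldr_cons, diffOp]
    split_ifs
    · exact ih _
    · exact (ih _).sub (ih _)

theorem foldr_int_aux {d : ℕ} {Ω : Type*} [MeasurableSpace Ω] (μ : Measure Ω)
    (S : (Fin d → ℕ) → Ω → ℝ) (hS : ∀ α, Integrable (S α) μ)
    (l : List (Fin d)) (α : Fin d → ℕ) :
    Integrable (fun ω => l.foldr (fun i T => diffOp i T) (fun β => S β ω) α) μ := by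
  induction l generalizing α with
  | nil => exact hS α
  | cons i l ih =>
    simp only [List.foldr_cons, diffOp]
    split_ifs
    · exact ih _
    · exact (ih _).sub (ih _)

/-- Theorem 3.1, partial estimator: with `(S_α)` integrable, `N` an
`ℕ^d`-valued random variable independent of the family `(S_α)` with `P(N ≥ α) > 0`
for all `α ∈ I_0^n`, the partial estimator
`Z̄_n = Σ_{α ∈ I_0^n} ΔS_α · 1_{N ≥ α} / P(N ≥ α)` satisfies `E[Z̄_n] = E[S_{(n,…,n)}]`. -/
theorem partial_estimator_unbiased {d : ℕ} (hd : 1 ≤ d)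
    {Ω : Type*} [MeasureSpace Ω] [IsProbabilityMeasure (ℙ : Measure Ω)]
    (S : (Fin d → ℕ) → Ω → ℝ) (hS : ∀ α, Integrable (S α) ℙ)
    (N : Ω → (Fin d → ℕ)) (hN : Measurable N)
    (hind : IndepFun N (fun ω => fun α => S α ω) ℙ)
    (n : ℕ)
    (hpos : ∀ α ∈ Finset.Iic ((fun _ => n) : Fin d → ℕ), 0 < ℙ {ω | α ≤ N ω}) :
    ∫ ω, (∑ α ∈ Finset.Iic ((fun _ => n) : Fin d → ℕ),
        mixedDiff (fun β => S β ω) α * Set.indicator {ω' | α ≤ N ω'} 1 ω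
          / (ℙ {ω' | α ≤ N ω'}).toReal) ∂ℙ
      = ∫ ω, S (fun _ => n) ω ∂ℙ := by
  have hint : ∀ α, Integrable (fun ω => mixedDiff (fun β => S β ω) α) ℙ :=
    fun α => foldr_int_aux _ S hS _ α
  have hms : ∀ α, MeasurableSet {ω' | α ≤ N ω'} := fun α =>
    hN (Set.to_countable (Set.Ici α)).measurableSet
  have hindint : ∀ α, Integrable (Set.indicator {ω' | α ≤ N ω'} (1 : Ω → ℝ)) ℙ := fun α =>
    (integrable_const (1 : ℝ)).indicator (hms α)
  have hI : ∀ α, IndepFun (fun ω => mixedDiff (fun β => S β ω) α)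
      (Set.indicator {ω' | α ≤ N ω'} (1 : Ω → ℝ)) ℙ := fun α => by
    have hm : Measurable (Set.indicator (Set.Ici α) (1 : (Fin d → ℕ) → ℝ)) :=
      measurable_one.indicator (Set.to_countable (Set.Ici α)).measurableSet
    exact (hind.comp hm (foldr_meas_aux (List.finRange d) α)).symm
  rw [integral_finset_sum]
  · rw [← integral_congr_ae (Filter.Eventually.of_forall
      fun ω => mixedDiff_sum_aux (fun β => S β ω) n), integral_finset_sum _ fun α _ => hint α]
    refine Finset.sum_congr rfl fun α hα => ?_
    have hne : (ℙ {ω' | α ≤ N ω'}).toReal ≠ 0 :=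
      (ENNReal.toReal_pos (hpos α hα).ne' (measure_ne_top _ _)).ne'
    rw [integral_div, (hI α).integral_fun_mul_eq_mul_integral (hint α).1 (hindint α).1,
      integral_indicator_one (hms α), Measure.real, mul_div_assoc, div_self hne, mul_one]
  · intro α _
    exact ((hI α).integrable_mul (hint α) (hindint α)).div_const _
end

section
/- (Diagonal shell identity from the proof of Proposition 3.3) Let S : ℕ^d → V be a family into a real vector space. For any integers m, n with 1 ≤ m ≤ n, the sum of mixed increments over the shell of sup-norm exactly m satisfies Σ_{β ∈ I_0^n, |β|_∞ = m} ΔS_β = S_{(m,…,m)} − S_{(m−1,…,m−1)}; moreover Σ_{β ∈ I_0^n, |β|_∞ = 0} ΔS_β = S_0. -/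
theorem sum_diffOp_aux {d : ℕ} {V : Type*} [AddCommGroup V] [Module ℝ V]
    (i : Fin d) (T : (Fin d → ℕ) → V) (A : Fin d → Finset ℕ) (k : ℕ) :
    ∑ β ∈ Fintype.piFinset (Function.update A i (Finset.range (k+1))), diffOp i T β
      = ∑ β ∈ Fintype.piFinset (Function.update A i {k}), T β := by
  have mem : ∀ (B : Finset ℕ) (β : Fin d → ℕ),
      β ∈ Fintype.piFinset (Function.update A i B) ↔ β i ∈ B ∧ ∀ j, j ≠ i → β j ∈ A j := by
    intro B β
    rw [Fintype.mem_piFinset]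
    constructor
    · intro h
      refine ⟨by simpa using h i, fun j hj => by simpa [hj] using h j⟩
    · rintro ⟨h1, h2⟩ j
      by_cases hj : j = i
      · subst hj; simpa using h1
      · simpa [hj] using h2 j hj
  induction k with
  | zero =>
    apply Finset.sum_congr (by simp)
    intro β hβ
    have h := ((mem _ _).1 hβ).1
    simp only [Finset.mem_singleton] at h
    simp [diffOp, h]
  | succ k ih =>
    have hu : Fintype.piFinset (Function.update A i (Finset.range (k+1+1)))
        = Fintype.piFinset (Function.update A i (Finset.range (k+1))) ∪
          Fintype.piFinset (Function.update A i {k+1}) := by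
      ext β
      simp only [Finset.mem_union, mem, Finset.mem_range, Finset.mem_singleton]
      rw [← or_and_right]
      have : β i < k + 1 + 1 ↔ (β i < k+1 ∨ β i = k+1) := by omega
      rw [this]
    have hdj : Disjoint (Fintype.piFinset (Function.update A i (Finset.range (k+1))))
          (Fintype.piFinset (Function.update A i {k+1})) := by
      rw [Finset.disjoint_left]
      intro β h1 h2
      simp only [mem, Finset.mem_range, Finset.mem_singleton] at h1 h2
      omega
    rw [hu, Finset.sum_union hdj, ih]
    have h3 : ∑ β ∈ Fintype.piFinset (Function.update A i {k+1}), diffOp i T β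
        = ∑ β ∈ Fintype.piFinset (Function.update A i {k+1}), T β
          - ∑ β ∈ Fintype.piFinset (Function.update A i {k+1}), T (Function.update β i k) := by
      rw [← Finset.sum_sub_distrib]
      apply Finset.sum_congr rfl
      intro β hβ
      have h := ((mem _ _).1 hβ).1
      simp only [Finset.mem_singleton] at h
      simp [diffOp, h]
    have h4 : ∑ β ∈ Fintype.piFinset (Function.update A i {k+1}), T (Function.update β i k)
        = ∑ β ∈ Fintype.piFinset (Function.update A i {k}), T β := by
      refine Finset.sum_bij' (fun β _ => Function.update β i k)
        (fun β _ => Function.update β i (k+1)) ?_ ?_ ?_ ?_ ?_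
      · intro β hβ
        rw [mem] at hβ ⊢
        exact ⟨by simp, fun j hj => by simpa [hj] using hβ.2 j hj⟩
      · intro β hβ
        rw [mem] at hβ ⊢
        exact ⟨by simp, fun j hj => by simpa [hj] using hβ.2 j hj⟩
      · intro β hβ
        have h := ((mem _ _).1 hβ).1
        simp only [Finset.mem_singleton] at h
        simp [← h]
      · intro β hβ
        have h := ((mem _ _).1 hβ).1
        simp only [Finset.mem_singleton] at h
        simp [← h]
      · intros; rfl
    rw [h3, h4]; abel

theorem sum_foldr_aux {d : ℕ} {V : Type*} [AddCommGroup V] [Module ℝ V]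
    (S : (Fin d → ℕ) → V) (k : Fin d → ℕ) (L : List (Fin d)) (hL : L.Nodup) :
    ∑ β ∈ Fintype.piFinset (fun i => if i ∈ L then Finset.range (k i + 1) else {k i}),
      L.foldr (fun i T => diffOp i T) S β = S k := by
  induction L with
  | nil =>
    have : Fintype.piFinset (fun i => ({k i} : Finset ℕ)) = {k} := Fintype.piFinset_singleton k
    simp [this]
  | cons i L ih =>
    rw [List.nodup_cons] at hL
    rw [← ih hL.2]
    have h := sum_diffOp_aux i (L.foldr (fun i T => diffOp i T) S)
      (fun i => if i ∈ L then Finset.range (k i + 1) else {k i}) (k i)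
    have e1 : Function.update (fun i => if i ∈ L then Finset.range (k i + 1) else {k i}) i
        (Finset.range (k i + 1))
        = fun j => if j ∈ i :: L then Finset.range (k j + 1) else {k j} := by
      funext j
      by_cases hj : j = i
      · subst hj; simp
      · simp [hj]
    have e2 : Function.update (fun i => if i ∈ L then Finset.range (k i + 1) else {k i}) i {k i}
        = fun j => if j ∈ L then Finset.range (k j + 1) else {k j} := by
      funext j
      by_cases hj : j = i
      · subst hj; simp [hL.1]
      · simp [hj]
    rw [e1, e2] at h
    exact h

theorem sum_Iic_mixedDiff {d : ℕ} {V : Type*} [AddCommGroup V] [Module ℝ V]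
    (S : (Fin d → ℕ) → V) (k : Fin d → ℕ) :
    ∑ β ∈ Finset.Iic k, mixedDiff S β = S k := by
  rw [← sum_foldr_aux S k (List.finRange d) (List.nodup_finRange d)]
  apply Finset.sum_congr _ (fun _ _ => rfl)
  ext β
  simp [Pi.le_def, Nat.lt_succ_iff]

/-- diagonal shell identity from the proof of Proposition 3.3:
for `1 ≤ m ≤ n`, `Σ_{β ∈ I_0^n, |β|_∞ = m} ΔS_β = S_{(m,…,m)} − S_{(m−1,…,m−1)}`;
moreover `Σ_{β ∈ I_0^n, |β|_∞ = 0} ΔS_β = S_0`.  Here `|β|_∞ = max_i β_i` is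
`Finset.univ.sup β`. -/
theorem shell_sum_mixedDiff {d : ℕ} (hd : 1 ≤ d)
    {V : Type*} [AddCommGroup V] [Module ℝ V]
    (S : (Fin d → ℕ) → V) (m n : ℕ) (hm : 1 ≤ m) (hmn : m ≤ n) :
    (∑ β ∈ (Finset.Iic ((fun _ => n) : Fin d → ℕ)).filter
        (fun β => Finset.univ.sup β = m), mixedDiff S β
      = S (fun _ => m) - S (fun _ => m - 1)) ∧
    (∑ β ∈ (Finset.Iic ((fun _ => n) : Fin d → ℕ)).filter
        (fun β => Finset.univ.sup β = 0), mixedDiff S β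
      = S (fun _ => 0)) := by
  constructor
  · rw [← sum_Iic_mixedDiff S (fun _ => m), ← sum_Iic_mixedDiff S (fun _ => m - 1),
      eq_sub_iff_add_eq, ← Finset.sum_union]
    · apply Finset.sum_congr _ (fun _ _ => rfl)
      ext β
      have h1 : β ≤ (fun _ => n) ↔ Finset.univ.sup β ≤ n := by simp [Pi.le_def]
      have h2 : β ≤ (fun _ => m) ↔ Finset.univ.sup β ≤ m := by simp [Pi.le_def]
      have h3 : β ≤ (fun _ => m - 1) ↔ Finset.univ.sup β ≤ m - 1 := by
        simp only [Pi.le_def, Finset.sup_le_iff, Finset.mem_univ, true_imp_iff]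
      simp only [Finset.mem_union, Finset.mem_filter, Finset.mem_Iic, h1, h2, h3]
      omega
    · rw [Finset.disjoint_left]
      intro β ha hb
      have h3 : β ≤ (fun _ => m - 1) ↔ Finset.univ.sup β ≤ m - 1 := by
        simp only [Pi.le_def, Finset.sup_le_iff, Finset.mem_univ, true_imp_iff]
      simp only [Finset.mem_filter, Finset.mem_Iic, h3] at ha hb
      omega
  · rw [← sum_Iic_mixedDiff S (fun _ => 0)]
    apply Finset.sum_congr _ (fun _ _ => rfl)
    ext β
    have h1 : β ≤ (fun _ => n) ↔ Finset.univ.sup β ≤ n := by simp [Pi.le_def]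
    have h2 : β ≤ (fun _ => 0) ↔ Finset.univ.sup β ≤ 0 := by
      simp only [Pi.le_def, Finset.sup_le_iff, Finset.mem_univ, true_imp_iff]
    simp only [Finset.mem_filter, Finset.mem_Iic, h1, h2]
    omega
end

section
/- (Unbiasedness of the independent-sum estimator, partial form) Let (S_α)_{α ∈ ℕ^d} be integrable real random variables and let (Δ̃_α)_{α ∈ ℕ^d} be integrable real random variables with E[Δ̃_α] = E[ΔS_α] for every α. Let N be an ℕ^d-valued random variable independent of the family (Δ̃_α), with P(N ≥ α) > 0 for every α ∈ I_0^n, where n ∈ ℕ. Then the partial independent-sum estimator Z̃_n = Σ_{α ∈ I_0^n} Δ̃_α · 1_{{N ≥ α}} / P(N ≥ α) satisfies E[Z̃_n] = E[S_{(n,…,n)}]. -/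
open MeasureTheory ProbabilityTheory

theorem sum_piFinset_diffOp {d : ℕ} (i : Fin d) (n : ℕ) (s : Fin d → Finset ℕ)
    (hs : s i = Finset.range (n + 1)) (T : (Fin d → ℕ) → ℝ) :
    ∑ α ∈ Fintype.piFinset s, diffOp i T α
      = ∑ α ∈ Fintype.piFinset (Function.update s i {n}), T α := by
  have h1 : ∑ α ∈ Fintype.piFinset s, diffOp i T α
      = ∑ p ∈ Fintype.piFinset (Function.update s i {n}) ×ˢ Finset.range (n + 1),
          diffOp i T (Function.update p.1 i p.2) := by
    symm
    refine Finset.sum_nbij' (fun p => Function.update p.1 i p.2)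
      (fun α => (Function.update α i n, α i)) ?_ ?_ ?_ ?_ ?_
    · rintro ⟨β, k⟩ h
      simp only [Finset.mem_product, Fintype.mem_piFinset] at h ⊢
      intro j
      by_cases hj : j = i
      · subst hj; simpa [hs] using h.2
      · simpa [hj] using h.1 j
    · intro α h
      simp only [Finset.mem_product, Fintype.mem_piFinset] at h ⊢
      refine ⟨fun j => ?_, hs ▸ h i⟩
      by_cases hj : j = i
      · subst hj; simp
      · simpa [hj] using h j
    · rintro ⟨β, k⟩ h
      simp only [Finset.mem_product, Fintype.mem_piFinset] at h
      have hi : β i = n := by simpa using h.1 i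
      simp [← hi]
    · intro α h
      simp
    · intro p h
      rfl
  rw [h1, Finset.sum_product]
  refine Finset.sum_congr rfl fun β hβ => ?_
  have hi : β i = n := by simpa using (Fintype.mem_piFinset.1 hβ) i
  have key : ∀ m : ℕ, ∑ k ∈ Finset.range (m + 1), diffOp i T (Function.update β i k)
      = T (Function.update β i m) := by
    intro m
    induction m with
    | zero => simp [diffOp]
    | succ m ih => rw [Finset.sum_range_succ, ih]; simp [diffOp]
  rw [key, ← hi, Function.update_eq_self]

theorem sum_foldr_diffOp {d : ℕ} (n : ℕ) (S : (Fin d → ℕ) → ℝ) (l : List (Fin d))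
    (hl : l.Nodup) :
    ∑ α ∈ Fintype.piFinset (fun j => if j ∈ l then Finset.range (n + 1) else {n}),
      l.foldr (fun i T => diffOp i T) S α = S (fun _ => n) := by
  induction l with
  | nil =>
    have : Fintype.piFinset (fun _ : Fin d => ({n} : Finset ℕ)) = {fun _ => n} := by
      ext a; simp [funext_iff]
    simp [this]
  | cons i l ih =>
    rw [List.nodup_cons] at hl
    rw [List.foldr_cons, sum_piFinset_diffOp i n _ (by simp), ← ih hl.2]
    congr 2
    ext1 j
    by_cases hj : j = i
    · subst hj; simp [hl.1]
    · simp [hj]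

theorem sum_mixedDiff {d : ℕ} (n : ℕ) (S : (Fin d → ℕ) → ℝ) :
    ∑ α ∈ Finset.Iic ((fun _ => n) : Fin d → ℕ), mixedDiff S α = S (fun _ => n) := by
  rw [← sum_foldr_diffOp n S (List.finRange d) (List.nodup_finRange d)]
  refine Finset.sum_congr ?_ fun _ _ => rfl
  ext a
  simp [Pi.le_def]

theorem integrable_foldr_diffOp {d : ℕ} {Ω : Type*} [MeasurableSpace Ω] (μ : Measure Ω)
    (S : (Fin d → ℕ) → Ω → ℝ) (hS : ∀ α, Integrable (S α) μ) (l : List (Fin d)) :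
    ∀ α, Integrable (fun ω => l.foldr (fun i T => diffOp i T) (fun β => S β ω) α) μ := by
  induction l with
  | nil => exact hS
  | cons i l ih =>
    intro α
    simp only [List.foldr_cons, diffOp]
    split_ifs
    · exact ih _
    · exact (ih _).sub (ih _)

/-- unbiasedness of the independent-sum estimator, partial form:
with `(Δ̃_α)` integrable and `E[Δ̃_α] = E[ΔS_α]` for every `α`, and `N` independent
of the family `(Δ̃_α)` with `P(N ≥ α) > 0` on `I_0^n`, the partial estimator
`Z̃_n = Σ_{α ∈ I_0^n} Δ̃_α 1_{N ≥ α} / P(N ≥ α)` satisfies `E[Z̃_n] = E[S_{(n,…,n)}]`. -/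
theorem independent_sum_estimator_unbiased {d : ℕ} (hd : 1 ≤ d)
    {Ω : Type*} [MeasureSpace Ω] [IsProbabilityMeasure (ℙ : Measure Ω)]
    (S : (Fin d → ℕ) → Ω → ℝ) (hS : ∀ α, Integrable (S α) ℙ)
    (Δt : (Fin d → ℕ) → Ω → ℝ) (hΔt : ∀ α, Integrable (Δt α) ℙ)
    (hmean : ∀ α : Fin d → ℕ,
      (∫ ω, Δt α ω ∂ℙ) = ∫ ω, mixedDiff (fun β => S β ω) α ∂ℙ)
    (N : Ω → (Fin d → ℕ)) (hN : Measurable N)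
    (hind : IndepFun N (fun ω => fun α => Δt α ω) ℙ)
    (n : ℕ)
    (hpos : ∀ α ∈ Finset.Iic ((fun _ => n) : Fin d → ℕ), 0 < ℙ {ω | α ≤ N ω}) :
    ∫ ω, (∑ α ∈ Finset.Iic ((fun _ => n) : Fin d → ℕ),
        Δt α ω * Set.indicator {ω' | α ≤ N ω'} 1 ω
          / (ℙ {ω' | α ≤ N ω'}).toReal) ∂ℙ
      = ∫ ω, S (fun _ => n) ω ∂ℙ := by
  have hmeas : ∀ α : Fin d → ℕ, MeasurableSet {ω | α ≤ N ω} := fun α =>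
    hN (Set.to_countable (Set.Ici α)).measurableSet
  have hi1 : ∀ α : Fin d → ℕ,
      Integrable (Set.indicator {ω' | α ≤ N ω'} (1 : Ω → ℝ)) ℙ := fun α =>
    (integrable_const (1 : ℝ)).indicator (hmeas α)
  have hindep : ∀ α : Fin d → ℕ,
      IndepFun (Δt α) (Set.indicator {ω' | α ≤ N ω'} (1 : Ω → ℝ)) ℙ := by
    intro α
    have hm : Measurable (fun f : (Fin d → ℕ) → ℝ => f α) := measurable_pi_apply α
    have h := (hind.comp (φ := Set.indicator (Set.Ici α) (1 : (Fin d → ℕ) → ℝ))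
      (ψ := fun f : (Fin d → ℕ) → ℝ => f α)
      (measurable_one.indicator (Set.to_countable (Set.Ici α)).measurableSet)
      hm).symm
    exact h
  rw [integral_finsetSum]
  · have : ∀ α ∈ Finset.Iic ((fun _ => n) : Fin d → ℕ),
        ∫ ω, Δt α ω * Set.indicator {ω' | α ≤ N ω'} 1 ω
          / (ℙ {ω' | α ≤ N ω'}).toReal ∂ℙ = ∫ ω, mixedDiff (fun β => S β ω) α ∂ℙ := by
      intro α hα
      have hne : (ℙ {ω' | α ≤ N ω'}).toReal ≠ 0 :=
        (ENNReal.toReal_pos (hpos α hα).ne' (measure_ne_top _ _)).ne'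
      rw [integral_div, (hindep α).integral_fun_mul_eq_mul_integral
        (hΔt α).aestronglyMeasurable (hi1 α).aestronglyMeasurable,
        integral_indicator_one (hmeas α), measureReal_def, mul_div_cancel_right₀ _ hne, hmean]
    rw [Finset.sum_congr rfl this, ← integral_finsetSum]
    · simp only [sum_mixedDiff]
    · exact fun α _ => integrable_foldr_diffOp ℙ S hS _ α
  · intro α _
    exact ((hindep α).integrable_mul (hΔt α) (hi1 α)).div_const _
end
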